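/- arXiv:2511.09014 — 3 statements merged into one kernel-verified Lean document; each statement's English description precedes it below -/
import Mathlib

section
/- Suppose {q_0, …, q_{N−1}} is a strongly proper interpolation basis for the Birkhoff functionals L_1, …, L_N. Then for every k with 1 ≤ k ≤ N, the interpolation polynomials satisfy the recursion p_{k−1} = p_{k−2} + ((y_k − L_k(p_{k−2})) / L_k(g_{k−2,k−1})) · g_{k−2,k−1}, where the denominator L_k(g_{k−2,k−1}) is nonzero (for k = 1 the conventions p_{−1} = 0 and g_{−1,0} = q_0 apply). -/
open Polynomial Matrix

/-- The matrix `V_{k-1}` whose `(i,j)` entry is `L i (q j)`, for the first `k`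
functionals and polynomials. -/
noncomputable def Vmat {N : ℕ} (L : Fin N → (Polynomial ℝ →ₗ[ℝ] ℝ)) (q : Fin N → Polynomial ℝ)
    (k : ℕ) (hk : k ≤ N) : Matrix (Fin k) (Fin k) ℝ :=
  Matrix.of fun i j => L (Fin.castLE hk i) (q (Fin.castLE hk j))

/-- The auxiliary polynomial `g_{m-1, k}` (so `gAux L q m hm k` uses the first `m`
interpolation conditions; `gAux L q 0 _ k = q k` is the convention `g_{-1,k} = q k`). -/
noncomputable def gAux {N : ℕ} (L : Fin N → (Polynomial ℝ →ₗ[ℝ] ℝ)) (q : Fin N → Polynomial ℝ)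
    (m : ℕ) (hm : m ≤ N) (k : Fin N) : Polynomial ℝ :=
  q k - ∑ i : Fin m,
    (((Vmat L q m hm)⁻¹ *ᵥ fun i : Fin m => L (Fin.castLE hm i) (q k)) i) • q (Fin.castLE hm i)

/-- The interpolation polynomial `p_{k-1}` for the first `k` conditions and values `y`;
`pInterp L q y 0 _ = 0` is the convention `p_{-1} = 0`. -/
noncomputable def pInterp {N : ℕ} (L : Fin N → (Polynomial ℝ →ₗ[ℝ] ℝ)) (q : Fin N → Polynomial ℝ)
    (y : Fin N → ℝ) (k : ℕ) (hk : k ≤ N) : Polynomial ℝ :=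
  ∑ j : Fin k,
    (((Vmat L q k hk)⁻¹ *ᵥ fun i : Fin k => y (Fin.castLE hk i)) j) • q (Fin.castLE hk j)

theorem lin_sum_eq {N : ℕ} (L : Fin N → (Polynomial ℝ →ₗ[ℝ] ℝ)) (q : Fin N → Polynomial ℝ)
    (k : ℕ) (hk : k ≤ N) (c : Fin k → ℝ) (i : Fin k) :
    L (Fin.castLE hk i) (∑ j : Fin k, c j • q (Fin.castLE hk j)) = (Vmat L q k hk *ᵥ c) i := by
  simp [Vmat, Matrix.mulVec, dotProduct, mul_comm]

theorem lin_inv_eq {N : ℕ} (L : Fin N → (Polynomial ℝ →ₗ[ℝ] ℝ)) (q : Fin N → Polynomial ℝ)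
    (k : ℕ) (hk : k ≤ N) (hu : IsUnit (Vmat L q k hk).det) (w : Fin k → ℝ) (i : Fin k) :
    L (Fin.castLE hk i)
      (∑ j : Fin k, (((Vmat L q k hk)⁻¹ *ᵥ w) j) • q (Fin.castLE hk j)) = w i := by
  rw [lin_sum_eq, Matrix.mulVec_mulVec, Matrix.mul_nonsing_inv _ hu, Matrix.one_mulVec]

theorem coeff_unique {N : ℕ} (L : Fin N → (Polynomial ℝ →ₗ[ℝ] ℝ)) (q : Fin N → Polynomial ℝ)
    (k : ℕ) (hk : k ≤ N) (hu : IsUnit (Vmat L q k hk).det) (w c : Fin k → ℝ)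
    (h : ∀ i : Fin k, L (Fin.castLE hk i) (∑ j : Fin k, c j • q (Fin.castLE hk j)) = w i) :
    (Vmat L q k hk)⁻¹ *ᵥ w = c := by
  have : w = Vmat L q k hk *ᵥ c := by
    funext i
    rw [← h i, lin_sum_eq]
  rw [this, Matrix.mulVec_mulVec, Matrix.nonsing_inv_mul _ hu, Matrix.one_mulVec]

/-- for a strongly proper interpolation basis `q` for Birkhoff functionals `L`,
the interpolation polynomials satisfy
`p_{k-1} = p_{k-2} + ((y_k - L_k p_{k-2}) / L_k g_{k-2,k-1}) • g_{k-2,k-1}`,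
the denominator being nonzero. -/
theorem birkhoff_interpolation_recursion
    (N : ℕ) (hN : 1 ≤ N) (z : Fin N → ℝ) (α : Fin N → ℕ)
    (L : Fin N → (Polynomial ℝ →ₗ[ℝ] ℝ))
    (hL : ∀ (i : Fin N) (p : Polynomial ℝ),
      L i p = Polynomial.eval (z i) (Polynomial.derivative^[α i] p))
    (q : Fin N → Polynomial ℝ)
    (hq : ∀ (k : ℕ) (hk : k ≤ N), IsUnit (Vmat L q k hk).det)
    (y : Fin N → ℝ) :
    ∀ (k : ℕ) (hk1 : 1 ≤ k) (hk : k ≤ N),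
      L ⟨k - 1, by omega⟩ (gAux L q (k - 1) (by omega) ⟨k - 1, by omega⟩) ≠ 0 ∧
      pInterp L q y k hk =
        pInterp L q y (k - 1) (by omega) +
          ((y ⟨k - 1, by omega⟩ - L ⟨k - 1, by omega⟩ (pInterp L q y (k - 1) (by omega))) /
              L ⟨k - 1, by omega⟩ (gAux L q (k - 1) (by omega) ⟨k - 1, by omega⟩)) •
            gAux L q (k - 1) (by omega) ⟨k - 1, by omega⟩ := by
  intro k hk1 hk
  obtain ⟨m, rfl⟩ : ∃ m, k = m + 1 := ⟨k - 1, by omega⟩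
  simp only [Nat.add_sub_cancel]
  have hm : m ≤ N := by omega
  set l : Fin N := ⟨m, by omega⟩ with hl
  have hlast : Fin.castLE hk (Fin.last m) = l := rfl
  have hcast : ∀ i : Fin m, Fin.castLE hk i.castSucc = Fin.castLE hm i := fun i => rfl
  set g := gAux L q m hm l with hg
  set P := pInterp L q y m hm with hP
  have hg0 : ∀ i : Fin m, L (Fin.castLE hm i) g = 0 := by
    intro i
    rw [hg, gAux, map_sub, lin_inv_eq L q m hm (hq m hm), sub_self]
  have hP0 : ∀ i : Fin m, L (Fin.castLE hm i) P = y (Fin.castLE hm i) := by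
    intro i
    rw [hP, pInterp, lin_inv_eq L q m hm (hq m hm)]
  obtain ⟨d, hd1, hd⟩ : ∃ d : Fin (m + 1) → ℝ, d (Fin.last m) = 1 ∧
      ∑ j, d j • q (Fin.castLE hk j) = g := by
    refine ⟨Fin.snoc (fun i : Fin m =>
      -((Vmat L q m hm)⁻¹ *ᵥ fun i : Fin m => L (Fin.castLE hm i) (q l)) i) 1, by simp, ?_⟩
    rw [Fin.sum_univ_castSucc]
    simp only [Fin.snoc_castSucc, Fin.snoc_last, hcast, hlast, hg, gAux, neg_smul,
      Finset.sum_neg_distrib, one_smul]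
    abel
  obtain ⟨a, ha⟩ : ∃ a : Fin (m + 1) → ℝ, ∑ j, a j • q (Fin.castLE hk j) = P := by
    refine ⟨Fin.snoc ((Vmat L q m hm)⁻¹ *ᵥ fun i : Fin m => y (Fin.castLE hm i)) 0, ?_⟩
    rw [Fin.sum_univ_castSucc]
    simp only [Fin.snoc_castSucc, Fin.snoc_last, hcast, hP, pInterp, zero_smul, add_zero]
  have hne : L l g ≠ 0 := by
    intro h0
    have h := coeff_unique L q (m + 1) hk (hq _ hk) 0 d (by
      intro i
      rw [hd]
      refine Fin.lastCases ?_ (fun i => ?_) i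
      · exact h0
      · exact hg0 i)
    rw [Matrix.mulVec_zero] at h
    rw [← h] at hd1
    simp at hd1
  refine ⟨hne, ?_⟩
  set t := (y l - L l P) / L l g with ht
  have hsum : ∑ j, (a + t • d) j • q (Fin.castLE hk j) = P + t • g := by
    simp only [Pi.add_apply, Pi.smul_apply, add_smul, Finset.sum_add_distrib, smul_assoc,
      ← Finset.smul_sum, ha, hd]
  have h := coeff_unique L q (m + 1) hk (hq _ hk) (fun i => y (Fin.castLE hk i)) (a + t • d) (by
    intro i
    rw [hsum, map_add, map_smul]
    refine Fin.lastCases ?_ (fun i => ?_) i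
    · rw [hlast, ht, smul_eq_mul, div_mul_cancel₀ _ hne]
      ring
    · rw [hcast, hg0, hP0]
      simp)
  rw [pInterp, h, hsum]
end

section
/- Suppose {q_0, …, q_{N−1}} is a strongly proper interpolation basis for the Birkhoff functionals L_1, …, L_N. Then for every fixed k with 1 ≤ k ≤ N and every j with 0 ≤ j ≤ k−2, the auxiliary polynomials satisfy the recursion g_{j,k−1} = g_{j−1,k−1} − (L_{j+1}(g_{j−1,k−1}) / L_{j+1}(g_{j−1,j})) · g_{j−1,j}, where the denominator L_{j+1}(g_{j−1,j}) is nonzero (for j = 0 the convention g_{−1,m} = q_m applies). -/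
open Polynomial Matrix

theorem Vmat_mulVec_aux {N : ℕ} (L : Fin N → (Polynomial ℝ →ₗ[ℝ] ℝ)) (q : Fin N → Polynomial ℝ)
    (m : ℕ) (hm : m ≤ N) (c : Fin m → ℝ) (i : Fin m) :
    (Vmat L q m hm *ᵥ c) i = L (Fin.castLE hm i) (∑ l : Fin m, c l • q (Fin.castLE hm l)) := by
  simp [Vmat, Matrix.mulVec, dotProduct, map_sum, mul_comm]

theorem gAux_kill {N : ℕ} (L : Fin N → (Polynomial ℝ →ₗ[ℝ] ℝ)) (q : Fin N → Polynomial ℝ)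
    (m : ℕ) (hm : m ≤ N) (hV : IsUnit (Vmat L q m hm).det) (k : Fin N) (i : Fin m) :
    L (Fin.castLE hm i) (gAux L q m hm k) = 0 := by
  rw [gAux, map_sub, ← Vmat_mulVec_aux, Matrix.mulVec_mulVec, Matrix.mul_nonsing_inv _ hV,
    Matrix.one_mulVec, sub_self]

theorem gAux_unique {N : ℕ} (L : Fin N → (Polynomial ℝ →ₗ[ℝ] ℝ)) (q : Fin N → Polynomial ℝ)
    (m : ℕ) (hm : m ≤ N) (hV : IsUnit (Vmat L q m hm).det) (k : Fin N) (c : Fin m → ℝ)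
    (h : ∀ i : Fin m,
      L (Fin.castLE hm i) (q k - ∑ l : Fin m, c l • q (Fin.castLE hm l)) = 0) :
    gAux L q m hm k = q k - ∑ l : Fin m, c l • q (Fin.castLE hm l) := by
  have hb : (fun i : Fin m => L (Fin.castLE hm i) (q k)) = Vmat L q m hm *ᵥ c := by
    funext i
    rw [Vmat_mulVec_aux]
    have := h i
    rw [map_sub] at this
    linarith
  rw [gAux, hb, Matrix.mulVec_mulVec, Matrix.nonsing_inv_mul _ hV, Matrix.one_mulVec]

theorem gAux_expand {N : ℕ} (L : Fin N → (Polynomial ℝ →ₗ[ℝ] ℝ)) (q : Fin N → Polynomial ℝ)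
    (m : ℕ) (hm : m ≤ N) (k : Fin N) :
    ∃ c : Fin m → ℝ, gAux L q m hm k = q k - ∑ l : Fin m, c l • q (Fin.castLE hm l) :=
  ⟨_, rfl⟩

theorem sum_snoc_aux {N : ℕ} (q : Fin N → Polynomial ℝ) (j : ℕ) (hj : j + 1 ≤ N)
    (c : Fin j → ℝ) (t : ℝ) :
    ∑ l : Fin (j + 1), (Fin.snoc c t : Fin (j + 1) → ℝ) l • q (Fin.castLE hj l) =
      ∑ l : Fin j, c l • q (Fin.castLE (by omega) l) + t • q ⟨j, by omega⟩ := by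
  rw [Fin.sum_univ_castSucc]
  simp only [Fin.snoc_castSucc, Fin.snoc_last]
  rfl

theorem gAux_pivot_ne {N : ℕ} (L : Fin N → (Polynomial ℝ →ₗ[ℝ] ℝ)) (q : Fin N → Polynomial ℝ)
    (hq : ∀ (k : ℕ) (hk : k ≤ N), IsUnit (Vmat L q k hk).det) (j : ℕ) (hj : j + 1 ≤ N) :
    L ⟨j, by omega⟩ (gAux L q j (by omega) ⟨j, by omega⟩) ≠ 0 := by
  intro h0
  have hkill := gAux_kill L q j (by omega) (hq _ _) ⟨j, by omega⟩
  obtain ⟨c, hc⟩ := gAux_expand L q j (by omega) ⟨j, by omega⟩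
  have hs : ∑ l : Fin (j + 1), (Fin.snoc (-c) 1 : Fin (j + 1) → ℝ) l • q (Fin.castLE hj l) =
      gAux L q j (by omega) ⟨j, by omega⟩ := by
    rw [sum_snoc_aux, hc]
    simp only [Pi.neg_apply, neg_smul, Finset.sum_neg_distrib, one_smul]
    ring
  have hz : Vmat L q (j + 1) hj *ᵥ (Fin.snoc (-c) 1 : Fin (j + 1) → ℝ) = 0 := by
    funext i
    rw [Vmat_mulVec_aux, hs]
    refine Fin.lastCases ?_ (fun i => ?_) i
    · exact h0
    · exact hkill i
  have := Matrix.eq_zero_of_mulVec_eq_zero (hq (j + 1) hj).ne_zero hz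
  have h1 := congrFun this (Fin.last j)
  simp at h1

theorem gAux_step {N : ℕ} (L : Fin N → (Polynomial ℝ →ₗ[ℝ] ℝ)) (q : Fin N → Polynomial ℝ)
    (hq : ∀ (k : ℕ) (hk : k ≤ N), IsUnit (Vmat L q k hk).det) (j : ℕ) (hj : j + 1 ≤ N)
    (k : Fin N) :
    gAux L q (j + 1) hj k = gAux L q j (by omega) k -
      (L ⟨j, by omega⟩ (gAux L q j (by omega) k) /
        L ⟨j, by omega⟩ (gAux L q j (by omega) ⟨j, by omega⟩)) •
          gAux L q j (by omega) ⟨j, by omega⟩ := by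
  have hne := gAux_pivot_ne L q hq j hj
  have hkj := gAux_kill L q j (by omega) (hq _ _) ⟨j, by omega⟩
  have hkk := gAux_kill L q j (by omega) (hq _ _) k
  obtain ⟨c, hc⟩ := gAux_expand L q j (by omega) ⟨j, by omega⟩
  obtain ⟨d, hd⟩ := gAux_expand L q j (by omega) k
  set t := L ⟨j, by omega⟩ (gAux L q j (by omega) k) /
        L ⟨j, by omega⟩ (gAux L q j (by omega) ⟨j, by omega⟩) with ht
  have hs : gAux L q j (by omega) k - t • gAux L q j (by omega) ⟨j, by omega⟩ =
      q k - ∑ l : Fin (j + 1),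
        (Fin.snoc (d - t • c) t : Fin (j + 1) → ℝ) l • q (Fin.castLE hj l) := by
    rw [sum_snoc_aux, hc, hd]
    simp only [Pi.sub_apply, Pi.smul_apply, sub_smul, Finset.sum_sub_distrib, smul_sub,
      Finset.smul_sum, smul_assoc]
    ring
  rw [hs]
  apply gAux_unique L q (j + 1) hj (hq _ _)
  rw [← hs]
  intro i
  rw [map_sub, map_smul]
  refine Fin.lastCases ?_ (fun i => ?_) i
  · change L ⟨j, by omega⟩ _ - t • L ⟨j, by omega⟩ _ = 0
    rw [ht, smul_eq_mul, div_mul_cancel₀ _ hne, sub_self]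
  · have h1 := hkk i
    have h2 := hkj i
    change L (Fin.castLE (by omega) i) _ - t • L (Fin.castLE (by omega) i) _ = 0
    rw [h1, h2]
    simp

/-- for a strongly proper interpolation basis `q` for Birkhoff functionals `L`,
the auxiliary polynomials satisfy, for `1 ≤ k ≤ N` and `0 ≤ j ≤ k-2`,
`g_{j,k-1} = g_{j-1,k-1} - (L_{j+1}(g_{j-1,k-1}) / L_{j+1}(g_{j-1,j})) • g_{j-1,j}`,
the denominator being nonzero. -/
theorem birkhoff_auxiliary_recursion
    (N : ℕ) (hN : 1 ≤ N) (z : Fin N → ℝ) (α : Fin N → ℕ)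
    (L : Fin N → (Polynomial ℝ →ₗ[ℝ] ℝ))
    (hL : ∀ (i : Fin N) (p : Polynomial ℝ),
      L i p = Polynomial.eval (z i) (Polynomial.derivative^[α i] p))
    (q : Fin N → Polynomial ℝ)
    (hq : ∀ (k : ℕ) (hk : k ≤ N), IsUnit (Vmat L q k hk).det) :
    ∀ (k : ℕ) (hk1 : 1 ≤ k) (hk : k ≤ N) (j : ℕ) (hj : j + 2 ≤ k),
      L ⟨j, by omega⟩ (gAux L q j (by omega) ⟨j, by omega⟩) ≠ 0 ∧
      gAux L q (j + 1) (by omega) ⟨k - 1, by omega⟩ =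
        gAux L q j (by omega) ⟨k - 1, by omega⟩ -
          (L ⟨j, by omega⟩ (gAux L q j (by omega) ⟨k - 1, by omega⟩) /
              L ⟨j, by omega⟩ (gAux L q j (by omega) ⟨j, by omega⟩)) •
            gAux L q j (by omega) ⟨j, by omega⟩ := by
  intro k hk1 hk j hj
  exact ⟨gAux_pivot_ne L q hq j (by omega), gAux_step L q hq j (by omega) _⟩
end

section
/- Suppose {q_0, …, q_{N−1}} is a strongly proper interpolation basis for the Birkhoff functionals L_1, …, L_N. Then for every k with 1 ≤ k ≤ N: (i) L_i(g_{k−2,k−1}) = 0 for all i = 1, …, k−1; and (ii) L_k(g_{k−2,k−1}) = det(V_{k−1}) / det(V_{k−2}), which is nonzero. (For k = 1 the convention g_{−1,0} = q_0 applies and the claim reads L_1(q_0) = det V_0 ≠ 0.) -/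
open Polynomial Matrix

theorem L_gAux {N : ℕ} (L : Fin N → (Polynomial ℝ →ₗ[ℝ] ℝ)) (q : Fin N → Polynomial ℝ)
    (m : ℕ) (hm : m ≤ N) (k l : Fin N) :
    L l (gAux L q m hm k) = L l (q k) - ∑ i : Fin m,
      L l (q (Fin.castLE hm i)) *
        ((Vmat L q m hm)⁻¹ *ᵥ fun i : Fin m => L (Fin.castLE hm i) (q k)) i := by
  simp only [gAux, map_sub, map_sum, map_smul, smul_eq_mul]
  congr 1
  exact Finset.sum_congr rfl fun i _ => mul_comm _ _

theorem L_gAux_zero {N : ℕ} (L : Fin N → (Polynomial ℝ →ₗ[ℝ] ℝ)) (q : Fin N → Polynomial ℝ)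
    (m : ℕ) (hm : m ≤ N) (k : Fin N) (hu : IsUnit (Vmat L q m hm).det) (i : Fin m) :
    L (Fin.castLE hm i) (gAux L q m hm k) = 0 := by
  rw [L_gAux]
  have h : (Vmat L q m hm *ᵥ ((Vmat L q m hm)⁻¹ *ᵥ
      fun i : Fin m => L (Fin.castLE hm i) (q k))) i = L (Fin.castLE hm i) (q k) := by
    rw [Matrix.mulVec_mulVec, Matrix.mul_nonsing_inv _ hu, Matrix.one_mulVec]
  rw [sub_eq_zero, ← h]
  rfl

theorem det_Vmat_succ {N : ℕ} (L : Fin N → (Polynomial ℝ →ₗ[ℝ] ℝ)) (q : Fin N → Polynomial ℝ)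
    (m : ℕ) (hm : m + 1 ≤ N) (hm' : m ≤ N) (hu : IsUnit (Vmat L q m hm').det) :
    (Vmat L q (m + 1) hm).det =
      (Vmat L q m hm').det * L ⟨m, hm⟩ (gAux L q m hm' ⟨m, hm⟩) := by
  have : Invertible (Vmat L q m hm') := Matrix.invertibleOfIsUnitDet _ hu
  have h : (Vmat L q (m + 1) hm).submatrix (finSumFinEquiv (m := m) (n := 1)) finSumFinEquiv =
      Matrix.fromBlocks (Vmat L q m hm')
        (Matrix.of fun i _ => L (Fin.castLE hm' i) (q ⟨m, hm⟩))
        (Matrix.of fun _ j => L ⟨m, hm⟩ (q (Fin.castLE hm' j)))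
        (Matrix.of fun _ _ => L ⟨m, hm⟩ (q ⟨m, hm⟩)) := by
    ext i j
    rcases i with i | i <;> rcases j with j | j <;>
      (try fin_cases i) <;> (try fin_cases j) <;> rfl
  rw [← Matrix.det_submatrix_equiv_self (finSumFinEquiv (m := m) (n := 1)), h,
    Matrix.det_fromBlocks₁₁, L_gAux, Matrix.invOf_eq_nonsing_inv, Matrix.det_fin_one,
    Matrix.mul_assoc]
  rfl

/-- for a strongly proper interpolation basis `q` for Birkhoff functionals `L`,
for every `1 ≤ k ≤ N` the polynomial `g_{k-2,k-1}` is annihilated by `L_1, …, L_{k-1}`,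
while `L_k (g_{k-2,k-1}) = det V_{k-1} / det V_{k-2} ≠ 0`. -/
theorem birkhoff_newton_basis_values
    (N : ℕ) (hN : 1 ≤ N) (z : Fin N → ℝ) (α : Fin N → ℕ)
    (L : Fin N → (Polynomial ℝ →ₗ[ℝ] ℝ))
    (hL : ∀ (i : Fin N) (p : Polynomial ℝ),
      L i p = Polynomial.eval (z i) (Polynomial.derivative^[α i] p))
    (q : Fin N → Polynomial ℝ)
    (hq : ∀ (k : ℕ) (hk : k ≤ N), IsUnit (Vmat L q k hk).det) :
    ∀ (k : ℕ) (hk1 : 1 ≤ k) (hk : k ≤ N),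
      (∀ (i : ℕ) (hi : i < k - 1),
        L ⟨i, by omega⟩ (gAux L q (k - 1) (by omega) ⟨k - 1, by omega⟩) = 0) ∧
      L ⟨k - 1, by omega⟩ (gAux L q (k - 1) (by omega) ⟨k - 1, by omega⟩) =
        (Vmat L q k hk).det / (Vmat L q (k - 1) (by omega)).det ∧
      L ⟨k - 1, by omega⟩ (gAux L q (k - 1) (by omega) ⟨k - 1, by omega⟩) ≠ 0 := by
  intro k hk1 hk
  obtain ⟨m, rfl⟩ : ∃ m, k = m + 1 := ⟨k - 1, by omega⟩
  have hm : m ≤ N := by omega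
  have hd := det_Vmat_succ L q m hk hm (hq m hm)
  have h0 := (hq m hm).ne_zero
  have h1 := (hq (m + 1) hk).ne_zero
  refine ⟨fun i hi => L_gAux_zero L q m hm ⟨m, hk⟩ (hq m hm) ⟨i, hi⟩, ?_, ?_⟩
  · change L ⟨m, hk⟩ (gAux L q m hm ⟨m, hk⟩) = _ / (Vmat L q m hm).det
    rw [hd, mul_div_cancel_left₀ _ h0]
  · change L ⟨m, hk⟩ (gAux L q m hm ⟨m, hk⟩) ≠ 0
    rw [hd] at h1
    exact right_ne_zero_of_mul h1
end
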